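/- For every X ∈ ES, the axiomatic system XL is sound and complete with respect to the set of X-valid formulas of Φ: for every formula φ ∈ Φ, ⊢_XL φ if and only if ⊨_XL φ. -/

import Mathlib

/-!
Soundness is an induction on derivations. Completeness is proved with one canonical model for all
eight systems, whose states are the maximal consistent sets.

Fix a state `s` and say that `C` forces `φ` when `⟨C⟩φ ∈ s`. The successors of `s` are the states
`t` containing everything forced by `∅` and, when D ∈ X, contained in the set of formulas forced by
`AG`. The logical core is `World.Forces.exists_succ`: if `C` forces `φ` but not `χ`, some successor
contains `φ` and not `χ`. When D ∈ X this is a prime separation argument, since A-Det says that the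
formulas not forced by `AG` are closed under disjunction.

Each agent plays an optional proposal `(C, φ)`, a natural number as a bid, and a nominated state.
A proposal is agreed when it comes from a nonempty `C` that forces `φ` and all members of `C` make
it. A profile is available when, for every `D`, the formulas agreed within `D` follow from a single
formula forced by `D`; its possible outcomes are the successors satisfying all agreed formulas.
Without D every possible outcome is an outcome, and with D the outcome is the one nominated by the
strictly highest bidder (an arbitrary one if this makes no sense). If I ∈ X, all profiles are
available by A-IA (`avail_of_independent`).

For the truth lemma, a coalition `D` that forces `φ` achieves it by unanimously proposing `(D, φ)`.
Conversely, if `D` does not force `χ`, then against any available joint action of `D ≠ AG` an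
outsider outbids everybody and nominates a successor refuting `χ`; when `D = AG`, the definition of
successor already excludes that the outcomes all satisfy `χ` (`forces_of_profile`).
-/

namespace CL

/-- The language Φ of coalition logic over a set of agents, with atomic
propositions drawn from ℕ (a countable set). -/
inductive Formula (Agent : Type) : Type
  | top : Formula Agent
  | atom : ℕ → Formula Agent
  | neg : Formula Agent → Formula Agent
  | and : Formula Agent → Formula Agent → Formula Agent
  | coal : Set Agent → Formula Agent → Formula Agent

namespace Formula

variable {Agent : Type}

def bot : Formula Agent := neg top

def or (φ ψ : Formula Agent) : Formula Agent := neg (and (neg φ) (neg ψ))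

def imp (φ ψ : Formula Agent) : Formula Agent := or (neg φ) ψ

def iff (φ ψ : Formula Agent) : Formula Agent := and (imp φ ψ) (imp ψ φ)

end Formula

/-- The three frame properties: seriality, independence of agents, determinism.
`ES` is represented by `Set P3`, the eight subsets of {S, I, D}. -/
inductive P3 : Type
  | S | I | D
deriving DecidableEq
/-- Propositional evaluation of a formula, treating coalition formulas and
atoms as propositional atoms (valued by `v`). -/
def Formula.evalProp {Agent : Type} (v : Formula Agent → Bool) : Formula Agent → Bool
  | .top => true
  | .atom n => v (.atom n)
  | .neg φ => !(φ.evalProp v)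
  | .and φ ψ => φ.evalProp v && ψ.evalProp v
  | .coal C φ => v (.coal C φ)

/-- A propositional tautology. -/
def Tautology {Agent : Type} (φ : Formula Agent) : Prop :=
  ∀ v : Formula Agent → Bool, φ.evalProp v = true

/-- Derivability in the axiomatic system XL, for X ∈ ES (X : Set P3).
MCL is the case X = ∅ and CL is the case X = {S, I, D}. -/
inductive Deriv {Agent : Type} (X : Set P3) : Formula Agent → Prop
  | taut {φ : Formula Agent} : Tautology φ → Deriv X φ
  | naaa (C : Set Agent) : Deriv X (Formula.neg (Formula.coal C Formula.bot))
  | mg (C : Set Agent) (φ ψ : Formula Agent) :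
      Deriv X ((Formula.coal ∅ (φ.imp ψ)).imp ((Formula.coal C φ).imp (Formula.coal C ψ)))
  | mc {C D : Set Agent} (h : C ⊆ D) (φ : Formula Agent) :
      Deriv X ((Formula.coal C φ).imp (Formula.coal D φ))
  | ser (h : P3.S ∈ X) (C : Set Agent) : Deriv X (Formula.coal C Formula.top)
  | ia (h : P3.I ∈ X) {C D : Set Agent} (hCD : C ∩ D = ∅) (φ ψ : Formula Agent) :
      Deriv X (((Formula.coal C φ).and (Formula.coal D ψ)).imp
        (Formula.coal (C ∪ D) (φ.and ψ)))
  | det (h : P3.D ∈ X) (C : Set Agent) (φ ψ : Formula Agent) :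
      Deriv X ((Formula.coal C (φ.or ψ)).imp
        ((Formula.coal C φ).or (Formula.coal Set.univ ψ)))
  | mp {φ ψ : Formula Agent} : Deriv X (φ.imp ψ) → Deriv X φ → Deriv X ψ
  | cn {φ : Formula Agent} (C : Set Agent) (ψ : Formula Agent) :
      Deriv X φ → Deriv X ((Formula.coal C ψ).imp (Formula.coal ∅ φ))
section
open Classical

/-- Merge of two joint actions of disjoint coalitions. -/
noncomputable def jaUnion {Agent Act : Type} {C D : Set Agent}
    (σC : C → Act) (σD : D → Act) : ↥(C ∪ D) → Act :=
  fun a =>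
    if h : a.1 ∈ C then σC ⟨a.1, h⟩
    else σD ⟨a.1, ((Set.mem_union _ _ _).mp a.2).resolve_left h⟩

end

/-- A general concurrent game frame: a nonempty set of states, a nonempty set
of actions, and an outcome function for the grand coalition.  Joint actions of
a coalition C are functions C → Act; action profiles are functions Agent → Act. -/
structure Frame (Agent : Type) where
  State : Type
  state_nonempty : Nonempty State
  Act : Type
  act_nonempty : Nonempty Act
  out : State → (Agent → Act) → Set State

namespace Frame

variable {Agent : Type} (F : Frame Agent)

/-- Outcome function for a coalition C. -/
def outC (C : Set Agent) (s : F.State) (σ : C → F.Act) : Set F.State :=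
  ⋃ (τ : Agent → F.Act) (_ : ∀ a : C, τ a.1 = σ a), F.out s τ

/-- Availability function: the available joint actions of C at s. -/
def aja (C : Set Agent) (s : F.State) : Set (C → F.Act) :=
  {σ | (F.outC C s σ).Nonempty}

def Serial : Prop := ∀ (s : F.State) (C : Set Agent), (F.aja C s).Nonempty

def Independent : Prop :=
  ∀ (s : F.State) (C D : Set Agent), C ∩ D = ∅ →
    ∀ σC ∈ F.aja C s, ∀ σD ∈ F.aja D s, jaUnion σC σD ∈ F.aja (C ∪ D) s

def Deterministic : Prop :=
  ∀ s : F.State, ∀ σ ∈ F.aja Set.univ s, ∃ t : F.State, F.outC Set.univ s σ = {t}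

end Frame

/-- A general concurrent game model: a frame together with a labeling function
(atomic propositions are drawn from the countable set ℕ). -/
structure Model (Agent : Type) extends Frame Agent where
  lab : State → Set ℕ

namespace Model

variable {Agent : Type} (M : Model Agent)

/-- Satisfaction: M, s ⊨ φ. -/
def sat : Formula Agent → M.State → Prop
  | .top, _ => True
  | .atom n, s => n ∈ M.lab s
  | .neg φ, s => ¬ sat φ s
  | .and φ ψ, s => sat φ s ∧ sat ψ s
  | .coal C φ, s => ∃ σ ∈ M.toFrame.aja C s, ∀ t ∈ M.toFrame.outC C s σ, sat φ t

/-- M is an X-model (for X ∈ ES). -/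
def IsX (X : Set P3) : Prop :=
  (P3.S ∈ X → M.toFrame.Serial) ∧ (P3.I ∈ X → M.toFrame.Independent) ∧
    (P3.D ∈ X → M.toFrame.Deterministic)

end Model

/-- φ is X-valid: φ holds at every pointed X-model. -/
def XValid {Agent : Type} (X : Set P3) (φ : Formula Agent) : Prop :=
  ∀ M : Model Agent, M.IsX X → ∀ s : M.State, M.sat φ s

/-- φ is X-satisfiable: φ holds at some pointed X-model. -/
def XSat {Agent : Type} (X : Set P3) (φ : Formula Agent) : Prop :=
  ∃ M : Model Agent, M.IsX X ∧ ∃ s : M.State, M.sat φ s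

/-- φ ⊨_XL ψ : ψ holds at every pointed X-model at which φ holds. -/
def XConseq {Agent : Type} (X : Set P3) (φ ψ : Formula Agent) : Prop :=
  ∀ M : Model Agent, M.IsX X → ∀ s : M.State, M.sat φ s → M.sat ψ s

/-! ### Soundness -/

section Soundness

variable {Agent : Type}

theorem Frame.mem_outC (F : Frame Agent) (C : Set Agent) (s t : F.State) (σ : C → F.Act) :
    t ∈ F.outC C s σ ↔ ∃ τ : Agent → F.Act, (∀ a : C, τ a.1 = σ a) ∧ t ∈ F.out s τ := by
  simp [Frame.outC]

/-- Truth of `⟨C⟩φ` in terms of full action profiles only: a joint action of `C` is represented by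
any available profile extending it. -/
theorem Model.sat_coal (M : Model Agent) (C : Set Agent) (φ : Formula Agent) (s : M.State) :
    M.sat (.coal C φ) s ↔ ∃ τ : Agent → M.Act, (M.out s τ).Nonempty ∧
      ∀ τ' : Agent → M.Act, (∀ a ∈ C, τ' a = τ a) → ∀ t ∈ M.out s τ', M.sat φ t := by
  constructor
  · rintro ⟨σ, ⟨t, ht⟩, h⟩
    obtain ⟨τ, hτ, htτ⟩ := (Frame.mem_outC _ _ _ _ _).1 ht
    refine ⟨τ, ⟨t, htτ⟩, fun τ' hτ' u hu => h u ((Frame.mem_outC _ _ _ _ _).2 ⟨τ', ?_, hu⟩)⟩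
    intro a
    rw [hτ' a.1 a.2, hτ a]
  · rintro ⟨τ, ⟨t, ht⟩, h⟩
    refine ⟨fun a => τ a.1, ⟨t, (Frame.mem_outC _ _ _ _ _).2 ⟨τ, fun _ => rfl, ht⟩⟩, ?_⟩
    intro u hu
    obtain ⟨τ', hτ', hu'⟩ := (Frame.mem_outC _ _ _ _ _).1 hu
    exact h τ' (fun a ha => hτ' ⟨a, ha⟩) u hu'

theorem Model.sat_imp (M : Model Agent) (φ ψ : Formula Agent) (s : M.State) :
    M.sat (φ.imp ψ) s ↔ (M.sat φ s → M.sat ψ s) := by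
  simp [Formula.imp, Formula.or, Model.sat]

theorem Model.sat_or (M : Model Agent) (φ ψ : Formula Agent) (s : M.State) :
    M.sat (φ.or ψ) s ↔ (M.sat φ s ∨ M.sat ψ s) := by
  simp only [Formula.or, Model.sat]
  tauto

open Classical in
theorem Model.sat_of_tautology (M : Model Agent) {φ : Formula Agent} (h : Tautology φ)
    (s : M.State) : M.sat φ s := by
  have key : ∀ ψ : Formula Agent,
      ψ.evalProp (fun χ => decide (M.sat χ s)) = true ↔ M.sat ψ s := by
    intro ψ
    induction ψ with
    | top => simp [Formula.evalProp, Model.sat]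
    | atom n => simp [Formula.evalProp]
    | neg ψ ih => simp [Formula.evalProp, Model.sat, ← ih]
    | and ψ χ ih₁ ih₂ => simp [Formula.evalProp, Model.sat, ih₁, ih₂]
    | coal C ψ _ => simp [Formula.evalProp]
  exact (key φ).1 (h _)

theorem soundness {X : Set P3} {φ : Formula Agent} (h : Deriv X φ) : XValid X φ := by
  intro M hM
  induction h with
  | taut h => exact M.sat_of_tautology h
  | naaa C =>
    intro s
    simp only [Model.sat, Formula.bot]
    rintro ⟨σ, ⟨t, ht⟩, h⟩
    exact h t ht trivial
  | mg C φ ψ =>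
    intro s
    simp only [Model.sat_imp, Model.sat_coal]
    rintro ⟨τ₀, -, h₀⟩ ⟨τ, hne, h⟩
    exact ⟨τ, hne, fun τ' hτ' t ht => h₀ τ' (by simp) t ht (h τ' hτ' t ht)⟩
  | mc hCD φ =>
    intro s
    simp only [Model.sat_imp, Model.sat_coal]
    rintro ⟨τ, hne, h⟩
    exact ⟨τ, hne, fun τ' hτ' => h τ' fun a ha => hτ' a (hCD ha)⟩
  | ser hS C =>
    intro s
    obtain ⟨σ, hσ⟩ := hM.1 hS s C
    exact ⟨σ, hσ, fun _ _ => trivial⟩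
  | @ia hI C D hCD φ ψ =>
    intro s
    rw [Model.sat_imp]
    rintro ⟨⟨σ, hσ, h₁⟩, ⟨ρ, hρ, h₂⟩⟩
    refine ⟨jaUnion σ ρ, hM.2.1 hI s C D hCD σ hσ ρ hρ, fun t ht => ?_⟩
    obtain ⟨τ, hτ, hout⟩ := (Frame.mem_outC _ _ _ _ _).1 ht
    refine ⟨h₁ t ((Frame.mem_outC _ _ _ _ _).2 ⟨τ, fun a => ?_, hout⟩),
      h₂ t ((Frame.mem_outC _ _ _ _ _).2 ⟨τ, fun a => ?_, hout⟩)⟩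
    · rw [hτ ⟨a.1, Or.inl a.2⟩]
      simp [jaUnion]
    · have ha : a.1 ∉ C := fun hC => by
        have : a.1 ∈ C ∩ D := ⟨hC, a.2⟩
        simp [hCD] at this
      rw [hτ ⟨a.1, Or.inr a.2⟩]
      simp [jaUnion, ha]
  | det hD C φ ψ =>
    intro s
    simp only [Model.sat_imp, Model.sat_or]
    rintro ⟨σ, hσ, h⟩
    by_cases hall : ∀ t ∈ M.toFrame.outC C s σ, M.sat φ t
    · exact Or.inl ⟨σ, hσ, hall⟩
    · right
      push Not at hall
      obtain ⟨t, ht, hφ⟩ := hall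
      have hψ : M.sat ψ t := (((M.sat_or _ _ _).1 (h t ht)).resolve_left hφ)
      obtain ⟨τ, hτ, hout⟩ := (Frame.mem_outC _ _ _ _ _).1 ht
      have hmem : t ∈ M.toFrame.outC Set.univ s (fun a => τ a.1) :=
        (Frame.mem_outC _ _ _ _ _).2 ⟨τ, fun _ => rfl, hout⟩
      obtain ⟨u, hu⟩ := hM.2.2 hD s _ ⟨t, hmem⟩
      refine ⟨_, ⟨t, hmem⟩, fun w hw => ?_⟩
      rw [hu] at hmem hw
      rw [Set.mem_singleton_iff.1 hw, ← Set.mem_singleton_iff.1 hmem]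
      exact hψ
  | mp _ _ ih₁ ih₂ => exact fun s => (M.sat_imp _ _ s).1 (ih₁ s) (ih₂ s)
  | cn C ψ _ ih =>
    intro s
    simp only [Model.sat_imp, Model.sat_coal]
    rintro ⟨τ, hne, -⟩
    exact ⟨τ, hne, fun _ _ t _ => ih t⟩

end Soundness

/-! ### Maximal consistent theories -/

section Worlds

variable {Agent : Type}

/-- A theory: a set of formulas containing the theorems of XL and closed under modus ponens. -/
structure IsTheory (X : Set P3) (T : Set (Formula Agent)) : Prop where
  deriv : ∀ φ, Deriv X φ → φ ∈ T
  mp : ∀ φ ψ, φ.imp ψ ∈ T → φ ∈ T → ψ ∈ T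

namespace IsTheory

variable {X : Set P3} {T : Set (Formula Agent)}

theorem taut (hT : IsTheory X T) {φ : Formula Agent} (h : Tautology φ) : φ ∈ T :=
  hT.deriv _ (.taut h)

theorem taut₁ (hT : IsTheory X T) {φ ψ : Formula Agent} (h : Tautology (φ.imp ψ))
    (hφ : φ ∈ T) : ψ ∈ T :=
  hT.mp _ _ (hT.taut h) hφ

theorem taut₂ (hT : IsTheory X T) {φ ψ χ : Formula Agent} (h : Tautology (φ.imp (ψ.imp χ)))
    (hφ : φ ∈ T) (hψ : ψ ∈ T) : χ ∈ T :=
  hT.mp _ _ (hT.taut₁ h hφ) hψ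

end IsTheory

theorem isTheory_deriv (X : Set P3) : IsTheory X {φ : Formula Agent | Deriv X φ} :=
  ⟨fun _ h => h, fun _ _ => Deriv.mp⟩

/-- A state of the canonical model: a theory that contains exactly one of `φ`, `¬φ` for each `φ`,
that is, a maximal consistent set. -/
structure World (Agent : Type) (X : Set P3) where
  carrier : Set (Formula Agent)
  isTheory : IsTheory X carrier
  neg_mem : ∀ φ, φ.neg ∈ carrier ↔ φ ∉ carrier

/-- Separation: a theory `F` disjoint from a set `J` that contains `⊥` and is closed under
disjunction extends to a maximal consistent set disjoint from `J`. A maximal theory among those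
disjoint from `J` is negation complete, since otherwise `φ → ψ₁` and `¬φ → ψ₂` would belong to it
for some `ψ₁, ψ₂ ∈ J`. -/
theorem exists_world {X : Set P3} {F J : Set (Formula Agent)} (hF : IsTheory X F)
    (hbot : Formula.bot ∈ J) (hor : ∀ φ ∈ J, ∀ ψ ∈ J, φ.or ψ ∈ J) (hFJ : ∀ φ ∈ F, φ ∉ J) :
    ∃ w : World Agent X, F ⊆ w.carrier ∧ ∀ φ ∈ w.carrier, φ ∉ J := by
  obtain ⟨T, hFT, hmax⟩ := zorn_subset_nonempty
    {T : Set (Formula Agent) | IsTheory X T ∧ ∀ φ ∈ T, φ ∉ J} (by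
      intro c hc hchain hne
      refine ⟨⋃₀ c, ⟨⟨fun φ h => ?_, fun φ ψ h₁ h₂ => ?_⟩, fun φ h => ?_⟩,
        fun s hs => Set.subset_sUnion_of_mem hs⟩
      · obtain ⟨s, hs⟩ := hne
        exact ⟨s, hs, (hc hs).1.deriv _ h⟩
      · obtain ⟨s, hs, h₁⟩ := h₁
        obtain ⟨t, ht, h₂⟩ := h₂
        rcases hchain.total hs ht with hst | hst
        · exact ⟨t, ht, (hc ht).1.mp _ _ (hst h₁) h₂⟩
        · exact ⟨s, hs, (hc hs).1.mp _ _ h₁ (hst h₂)⟩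
      · obtain ⟨s, hs, h⟩ := h
        exact (hc hs).2 _ h) F ⟨hF, hFJ⟩
  obtain ⟨hT, hTJ⟩ := hmax.prop
  have hext : ∀ φ, φ ∉ T → ∃ ψ ∈ J, φ.imp ψ ∈ T := by
    intro φ hφ
    by_contra! hcon
    have hle : T ⊆ {ψ | φ.imp ψ ∈ T} := fun ψ hψ =>
      hT.taut₁ (by intro v; simp [Formula.evalProp, Formula.imp, Formula.or]; grind) hψ
    have := hmax.le_of_ge (y := {ψ | φ.imp ψ ∈ T})
      ⟨⟨fun ψ hψ => hle (hT.deriv _ hψ), fun ψ χ h₁ h₂ => hT.taut₂ (by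
        intro v; simp [Formula.evalProp, Formula.imp, Formula.or]; grind) h₁ h₂⟩,
        fun ψ h₁ h₂ => hcon ψ h₂ h₁⟩ hle
    exact hφ (this (hT.taut (by
      intro v; simp [Formula.evalProp, Formula.imp, Formula.or])))
  refine ⟨⟨T, hT, fun φ => ⟨fun h₁ h₂ => ?_, fun h => ?_⟩⟩, hFT, hTJ⟩
  · exact hTJ _ (hT.taut₂ (by
      intro v; simp [Formula.evalProp, Formula.imp, Formula.or]; grind) h₁ h₂) hbot
  · by_contra hn
    obtain ⟨ψ₁, hJ₁, h₁⟩ := hext _ h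
    obtain ⟨ψ₂, hJ₂, h₂⟩ := hext _ hn
    exact hTJ _ (hT.taut₂ (by
      intro v; simp [Formula.evalProp, Formula.imp, Formula.or]; grind) h₁ h₂) (hor _ hJ₁ _ hJ₂)

namespace World

variable {X : Set P3} (s : World Agent X)

theorem and_mem (φ ψ : Formula Agent) :
    φ.and ψ ∈ s.carrier ↔ φ ∈ s.carrier ∧ ψ ∈ s.carrier := by
  refine ⟨fun h => ⟨s.isTheory.taut₁ ?_ h, s.isTheory.taut₁ ?_ h⟩,
    fun h => s.isTheory.taut₂ ?_ h.1 h.2⟩ <;>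
  · intro v
    simp [Formula.evalProp, Formula.imp, Formula.or]
    try grind

theorem or_mem {φ ψ : Formula Agent} (h : φ.or ψ ∈ s.carrier) :
    φ ∈ s.carrier ∨ ψ ∈ s.carrier := by
  by_contra! hn
  have h₁ := (s.and_mem _ _).2 ⟨(s.neg_mem _).2 hn.1, (s.neg_mem _).2 hn.2⟩
  exact (s.neg_mem _).1 h h₁

/-- `s.Forces C φ` says that `⟨C⟩φ` belongs to `s`. -/
def Forces (C : Set Agent) (φ : Formula Agent) : Prop := Formula.coal C φ ∈ s.carrier

variable {s}

theorem Forces.mono {C D : Set Agent} {φ : Formula Agent} (h : s.Forces C φ) (hCD : C ⊆ D) :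
    s.Forces D φ :=
  s.isTheory.mp _ _ (s.isTheory.deriv _ (.mc hCD φ)) h

theorem Forces.mg {C : Set Agent} {φ ψ : Formula Agent} (h : s.Forces C φ)
    (h₀ : s.Forces ∅ (φ.imp ψ)) : s.Forces C ψ :=
  s.isTheory.mp _ _ (s.isTheory.mp _ _ (s.isTheory.deriv _ (.mg C φ ψ)) h₀) h

theorem Forces.nec {C : Set Agent} {φ ψ : Formula Agent} (h : s.Forces C φ)
    (hψ : Deriv X ψ) : s.Forces ∅ ψ :=
  s.isTheory.mp _ _ (s.isTheory.deriv _ (.cn C φ hψ)) h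

theorem Forces.weaken {C : Set Agent} {φ ψ : Formula Agent} (h : s.Forces C φ)
    (hψ : Deriv X (φ.imp ψ)) : s.Forces C ψ :=
  h.mg (h.nec hψ)

theorem not_forces_bot (C : Set Agent) : ¬ s.Forces C Formula.bot :=
  (s.neg_mem _).1 (s.isTheory.deriv _ (.naaa C))

theorem Forces.top {C : Set Agent} {φ : Formula Agent} (h : s.Forces C φ) (D : Set Agent) :
    s.Forces D Formula.top :=
  (h.nec (.taut fun _ => rfl)).mono (Set.empty_subset _)

/-- The candidate successors of `s`: the worlds satisfying everything that the empty coalition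
forces and, in the deterministic systems, only formulas that the grand coalition forces. -/
def succ (s : World Agent X) : Set (World Agent X) :=
  {t | (∀ φ, s.Forces ∅ φ → φ ∈ t.carrier) ∧
    (P3.D ∈ X → ∀ φ ∈ t.carrier, s.Forces Set.univ φ)}

/-- If `C` forces `φ` but not `χ`, then some successor satisfies `φ` and refutes `χ`. The theory
`{ψ | ⟨∅⟩(φ ∧ ¬χ → ψ) ∈ s}` has to be separated from `{ψ | ⟨AG⟩ψ ∉ s}` in the deterministic
systems, where A-Det makes the latter closed under disjunction and disjoint from the former; it
has to be separated from the refutable formulas otherwise. -/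
theorem Forces.exists_succ {C : Set Agent} {φ χ : Formula Agent} (h : s.Forces C φ)
    (hχ : ¬ s.Forces C χ) : ∃ t ∈ s.succ, φ ∈ t.carrier ∧ χ ∉ t.carrier := by
  have hF : IsTheory X {ψ | s.Forces ∅ ((φ.and χ.neg).imp ψ)} := by
    refine ⟨fun ψ hψ => ?_, fun ψ₁ ψ₂ h₁ h₂ => ?_⟩
    · refine h.nec (.mp (.taut ?_) hψ)
      intro v; simp [Formula.evalProp, Formula.imp, Formula.or]; grind
    · refine Forces.mg h₂ (Forces.weaken h₁ (.taut ?_))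
      intro v; simp [Formula.evalProp, Formula.imp, Formula.or]; grind
  have hdet : P3.D ∈ X → ∀ (B : Set Agent) (ψ₁ ψ₂ : Formula Agent), s.Forces B (ψ₁.or ψ₂) →
      s.Forces B ψ₁ ∨ s.Forces Set.univ ψ₂ := fun hD B ψ₁ ψ₂ hB =>
    s.or_mem (s.isTheory.mp _ _ (s.isTheory.deriv _ (.det hD B ψ₁ ψ₂)) hB)
  obtain ⟨t, hFt, hJ⟩ := exists_world
    (J := {ψ | (P3.D ∈ X ∧ ¬ s.Forces Set.univ ψ) ∨ (P3.D ∉ X ∧ Deriv X ψ.neg)}) hF (by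
      by_cases hD : P3.D ∈ X
      · exact Or.inl ⟨hD, not_forces_bot _⟩
      · exact Or.inr ⟨hD, .taut fun _ => rfl⟩) (by
      rintro ψ₁ (⟨hD, h₁⟩ | ⟨hD, h₁⟩) ψ₂ (⟨hD', h₂⟩ | ⟨hD', h₂⟩)
      · exact Or.inl ⟨hD, fun hor => (hdet hD _ _ _ hor).elim h₁ h₂⟩
      · exact absurd hD hD'
      · exact absurd hD' hD
      · refine Or.inr ⟨hD, .mp (.mp (.taut ?_) h₁) h₂⟩
        intro v; simp [Formula.evalProp, Formula.imp, Formula.or]; grind) (by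
      intro ψ hψ
      have h₁ : s.Forces C (χ.or ψ) := h.mg (Forces.weaken hψ (.taut (by
        intro v; simp [Formula.evalProp, Formula.imp, Formula.or]; grind)))
      rintro (⟨hD, hn⟩ | ⟨-, hn⟩)
      · exact (hdet hD _ _ _ h₁).elim hχ hn
      · refine hχ (h₁.weaken (.mp (.taut ?_) hn))
        intro v; simp [Formula.evalProp, Formula.imp, Formula.or]; grind)
  refine ⟨t, ⟨fun ψ hψ => hFt (Forces.weaken hψ (.taut ?_)), fun hD ψ hψ => ?_⟩, hFt ?_,
    (t.neg_mem _).1 (hFt ?_)⟩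
  · intro v; simp [Formula.evalProp, Formula.imp, Formula.or]; grind
  · by_contra hn
    exact hJ ψ hψ (Or.inl ⟨hD, hn⟩)
  · refine h.nec (.taut ?_)
    intro v; simp [Formula.evalProp, Formula.imp, Formula.or]; grind
  · refine h.nec (.taut ?_)
    intro v; simp [Formula.evalProp, Formula.imp, Formula.or]; grind

end World

end Worlds

/-! ### The canonical model -/

section Canonical

variable {Agent : Type} {X : Set P3}

/-- An action of the canonical model: optionally a proposal `(C, φ)` (a call on coalition `C` to force
`φ`), a bid, and a world nominated as the outcome should the bid win. -/
structure CanAct (Agent : Type) (X : Set P3) where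
  proposal : Option (Set Agent × Formula Agent)
  bid : ℕ
  pick : World Agent X

/-- Under the profile `τ`, all members of the nonempty coalition `C` propose `(C, φ)`, and
`⟨C⟩φ` holds at `s`. -/
def Agreed (s : World Agent X) (τ : Agent → CanAct Agent X) (C : Set Agent)
    (φ : Formula Agent) : Prop :=
  C.Nonempty ∧ s.Forces C φ ∧ ∀ a ∈ C, (τ a).proposal = some (C, φ)

/-- The available profiles: for each coalition `D`, the formulas agreed on by subcoalitions of `D`
follow jointly from one formula that `D` forces. -/
def Avail (s : World Agent X) (τ : Agent → CanAct Agent X) : Prop :=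
  ∀ D : Set Agent, ∃ θ, s.Forces D θ ∧
    ∀ C φ, C ⊆ D → Agreed s τ C φ → Deriv X (θ.imp φ)

/-- The successors satisfying every formula agreed on under `τ`. -/
def Poss (s : World Agent X) (τ : Agent → CanAct Agent X) : Set (World Agent X) :=
  {t | t ∈ s.succ ∧ ∀ C φ, Agreed s τ C φ → φ ∈ t.carrier}

/-- `t` is nominated by an agent whose bid is strictly the highest. -/
def Wins (τ : Agent → CanAct Agent X) (t : World Agent X) : Prop :=
  ∃ a, (τ a).pick = t ∧ ∀ b, b ≠ a → (τ b).bid < (τ a).bid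

theorem Wins.unique {τ : Agent → CanAct Agent X} {t u : World Agent X} (ht : Wins τ t)
    (hu : Wins τ u) : t = u := by
  obtain ⟨a, rfl, ha⟩ := ht
  obtain ⟨b, rfl, hb⟩ := hu
  by_cases hab : b = a
  · rw [hab]
  · exact absurd (ha b hab) (hb a (Ne.symm hab)).not_gt

/-- The single outcome in the deterministic systems: the possible outcome nominated by the winning
bid if there is one, and an arbitrary possible outcome otherwise. -/
noncomputable def result (s : World Agent X) (τ : Agent → CanAct Agent X) : World Agent X :=
  letI := Classical.propDecidable
  if h : ∃ t ∈ Poss s τ, Wins τ t then h.choose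
  else if h' : (Poss s τ).Nonempty then h'.some else s

/-- The outcome function of the canonical model. -/
def canOut (s : World Agent X) (τ : Agent → CanAct Agent X) : Set (World Agent X) :=
  {t | Avail s τ ∧ t ∈ Poss s τ ∧ (P3.D ∈ X → t = result s τ)}

theorem result_mem {s : World Agent X} {τ : Agent → CanAct Agent X} (h : (Poss s τ).Nonempty) :
    result s τ ∈ Poss s τ := by
  unfold result
  split_ifs with h₁
  · exact h₁.choose_spec.1
  · exact h.some_mem

theorem result_eq {s t : World Agent X} {τ : Agent → CanAct Agent X} (ht : t ∈ Poss s τ)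
    (hw : Wins τ t) : result s τ = t := by
  have h : ∃ t ∈ Poss s τ, Wins τ t := ⟨t, ht, hw⟩
  unfold result
  rw [dif_pos h]
  exact h.choose_spec.2.unique hw

theorem Avail.poss_nonempty {s : World Agent X} {τ : Agent → CanAct Agent X} (h : Avail s τ) :
    (Poss s τ).Nonempty := by
  obtain ⟨θ, hθ, hall⟩ := h Set.univ
  obtain ⟨t, ht, hθt, -⟩ := hθ.exists_succ (World.not_forces_bot _)
  exact ⟨t, ht, fun C φ hC =>
    t.isTheory.mp _ _ (t.isTheory.deriv _ (hall C φ (Set.subset_univ _) hC)) hθt⟩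

theorem Avail.canOut_nonempty {s : World Agent X} {τ : Agent → CanAct Agent X} (h : Avail s τ) :
    (canOut s τ).Nonempty :=
  ⟨result s τ, h, result_mem h.poss_nonempty, fun _ => rfl⟩

/-- If every agreement under `τ'` is an agreement under the available profile `τ` of a
subcoalition of `D`, then `τ'` is available. It is applied to a `τ'` that coincides with `τ` on `D`
and has no proposals outside `D`. -/
theorem Avail.of_agree {s : World Agent X} {τ τ' : Agent → CanAct Agent X} {D : Set Agent}
    (hagr : ∀ C φ, Agreed s τ' C φ → C ⊆ D ∧ Agreed s τ C φ) (h : Avail s τ) : Avail s τ' := by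
  intro B
  obtain ⟨θ, hθ, hall⟩ := h (D ∩ B)
  exact ⟨θ, hθ.mono Set.inter_subset_right, fun C φ hCB hC =>
    hall C φ (Set.subset_inter (hagr C φ hC).1 hCB) (hagr C φ hC).2⟩

/-- With independence of agents every profile is available: the coalitions agreeing on a proposal
are pairwise disjoint, so A-IA combines their formulas one coalition at a time. -/
theorem avail_of_independent [Finite Agent] (hI : P3.I ∈ X) {s : World Agent X}
    (hs : s.Forces ∅ Formula.top) (τ : Agent → CanAct Agent X) : Avail s τ := by
  intro D
  induction hn : D.ncard using Nat.strong_induction_on generalizing D with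
  | _ n ih =>
    by_cases hex : ∃ C φ, C ⊆ D ∧ Agreed s τ C φ
    · obtain ⟨C, φ, hCD, hC⟩ := hex
      obtain ⟨a, ha⟩ := hC.1
      obtain ⟨θ, hθ, hall⟩ := ih (D \ C).ncard (by
        rw [← hn]
        refine Set.ncard_lt_ncard ?_ (Set.toFinite _)
        exact ⟨Set.sdiff_subset, fun h => (h (hCD ha)).2 ha⟩) (D \ C) rfl
      refine ⟨φ.and θ, ?_, fun C' φ' hC'D hC' => ?_⟩
      · have := s.isTheory.mp _ _ (s.isTheory.deriv _
          (.ia hI (Set.inter_sdiff_self C D) φ θ)) ((s.and_mem _ _).2 ⟨hC.2.1, hθ⟩)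
        rwa [Set.union_sdiff_cancel hCD] at this
      · by_cases hmeet : ∃ b, b ∈ C ∧ b ∈ C'
        · obtain ⟨b, hb, hb'⟩ := hmeet
          have heq := (hC.2.2 b hb).symm.trans (hC'.2.2 b hb')
          simp only [Option.some.injEq, Prod.mk.injEq] at heq
          rw [← heq.2]
          refine .taut ?_
          intro v; simp [Formula.evalProp, Formula.imp, Formula.or]; grind
        · have hsub : C' ⊆ D \ C := fun b hb => ⟨hC'D hb, fun hbC => hmeet ⟨b, hbC, hb⟩⟩
          refine .mp (.taut ?_) (hall C' φ' hsub hC')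
          intro v; simp [Formula.evalProp, Formula.imp, Formula.or]; grind
    · refine ⟨Formula.top, hs.top _, fun C φ hCD hC => absurd ⟨C, φ, hCD, hC⟩ hex⟩

/-- The canonical model. -/
def canModel (w : World Agent X) : Model Agent where
  State := World Agent X
  state_nonempty := ⟨w⟩
  Act := CanAct Agent X
  act_nonempty := ⟨⟨none, 0, w⟩⟩
  out := canOut
  lab s := {n | Formula.atom n ∈ s.carrier}

theorem Avail.of_no_proposal {s : World Agent X} {τ : Agent → CanAct Agent X}
    (hs : s.Forces ∅ Formula.top) (h : ∀ a, (τ a).proposal = none) : Avail s τ := by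
  intro D
  refine ⟨Formula.top, hs.top _, fun C φ _ hC => ?_⟩
  obtain ⟨a, ha⟩ := hC.1
  have := hC.2.2 a ha
  simp [h a] at this

theorem canModel_isX [Finite Agent] (w : World Agent X) : (canModel w).IsX X := by
  classical
  -- every joint action is part of a profile, so its availability follows from that of the profile
  have haja : ∀ (s : World Agent X) (C : Set Agent) (τ : Agent → CanAct Agent X), Avail s τ →
      (fun a : C => τ a.1) ∈ (canModel w).toFrame.aja C s := by
    intro s C τ h
    obtain ⟨t, ht⟩ := h.canOut_nonempty
    exact ⟨t, (Frame.mem_outC _ _ _ _ _).2 ⟨τ, fun _ => rfl, ht⟩⟩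
  refine ⟨fun hS s C => ?_, fun hI s C D hCD σ hσ ρ hρ => ?_, fun hD s σ hσ => ?_⟩
  · exact ⟨_, haja s C (fun _ => ⟨none, 0, w⟩)
      (.of_no_proposal (s.isTheory.deriv _ (.ser hS ∅)) fun _ => rfl)⟩
  · obtain ⟨t, ht⟩ := hσ
    obtain ⟨τ, -, hav, -⟩ := (Frame.mem_outC _ _ _ _ _).1 ht
    obtain ⟨θ, hθ, -⟩ := hav ∅
    have := haja s (C ∪ D)
      (fun a => if h : a ∈ C ∪ D then jaUnion σ ρ ⟨a, h⟩ else ⟨none, 0, w⟩)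
      (avail_of_independent hI (hθ.top _) _)
    have heq : (fun a : ↥(C ∪ D) => if h : a.1 ∈ C ∪ D then jaUnion σ ρ ⟨a.1, h⟩
        else (⟨none, 0, w⟩ : CanAct Agent X)) = jaUnion σ ρ :=
      funext fun a => dif_pos a.2
    exact heq ▸ this
  · obtain ⟨t, ht⟩ := hσ
    obtain ⟨τ, hτ, hav, hP, hr⟩ := (Frame.mem_outC _ _ _ _ _).1 ht
    refine ⟨t, Set.eq_singleton_iff_unique_mem.2 ⟨ht, fun u hu => ?_⟩⟩
    obtain ⟨τ', hτ', hav', hP', hr'⟩ := (Frame.mem_outC _ _ _ _ _).1 hu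
    have : τ' = τ := funext fun a => (hτ' ⟨a, trivial⟩).trans (hτ ⟨a, trivial⟩).symm
    rw [hr' hD, hr hD, this]

/-- If `⟨D⟩φ ∈ s`, then `D` can force `φ` in the canonical model by all of `D` proposing
`(D, φ)`. -/
theorem exists_profile_of_forces {s : World Agent X} {D : Set Agent} {φ : Formula Agent}
    (h : s.Forces D φ) : ∃ τ : Agent → CanAct Agent X, (canOut s τ).Nonempty ∧
      ∀ τ' : Agent → CanAct Agent X, (∀ a ∈ D, τ' a = τ a) →
        ∀ t ∈ canOut s τ', φ ∈ t.carrier := by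
  classical
  rcases D.eq_empty_or_nonempty with rfl | hD
  · exact ⟨fun _ => ⟨none, 0, s⟩, (Avail.of_no_proposal (h.top _) fun _ => rfl).canOut_nonempty,
      fun τ' _ t ht => ht.2.1.1.1 φ h⟩
  · refine ⟨fun a => ⟨if a ∈ D then some (D, φ) else none, 0, s⟩, Avail.canOut_nonempty ?_, ?_⟩
    · intro B
      have hagr : ∀ C ψ, Agreed s (fun a => (⟨if a ∈ D then some (D, φ) else none, 0, s⟩ :
          CanAct Agent X)) C ψ → D = C ∧ φ = ψ := by
        intro C ψ hC
        obtain ⟨a, ha⟩ := hC.1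
        have := hC.2.2 a ha
        by_cases haD : a ∈ D <;> simp_all
      by_cases hDB : D ⊆ B
      · refine ⟨φ, h.mono hDB, fun C ψ _ hC => ?_⟩
        rw [← (hagr C ψ hC).2]
        refine .taut ?_
        intro v; simp [Formula.evalProp, Formula.imp, Formula.or]
      · refine ⟨Formula.top, h.top _, fun C ψ hCB hC => absurd ?_ hDB⟩
        rwa [(hagr C ψ hC).1]
    · intro τ' hτ' t ht
      refine ht.2.1.2 D φ ⟨hD, h, fun a ha => ?_⟩
      rw [hτ' a ha]
      simp [ha]

/-- Whatever `D` forces in the canonical model at `s`, it forces according to `s`. For `D ≠ AG` an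
agent outside `D` can outbid everybody and nominate a successor refuting `χ`; for `D = AG` in the
deterministic systems the outcome only satisfies formulas forced by `AG`. -/
theorem forces_of_profile [Finite Agent] {s : World Agent X} {D : Set Agent} {χ : Formula Agent}
    {τ : Agent → CanAct Agent X} (hne : (canOut s τ).Nonempty)
    (h : ∀ τ' : Agent → CanAct Agent X, (∀ a ∈ D, τ' a = τ a) →
      ∀ t ∈ canOut s τ', χ ∈ t.carrier) : s.Forces D χ := by
  classical
  by_contra hχ
  obtain ⟨u, hav, hu, hr⟩ := hne
  obtain ⟨θ, hθ, hall⟩ := hav D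
  obtain ⟨t, ht, hθt, hχt⟩ := hθ.exists_succ hχ
  have hφt : ∀ C φ, C ⊆ D → Agreed s τ C φ → φ ∈ t.carrier := fun C φ hCD hC =>
    t.isTheory.mp _ _ (t.isTheory.deriv _ (hall C φ hCD hC)) hθt
  by_cases hD : D = Set.univ
  · subst hD
    by_cases hX : P3.D ∈ X
    · exact hχ (hu.1.2 hX χ (h τ (fun _ _ => rfl) u ⟨hav, hu, hr⟩))
    · exact hχt (h τ (fun _ _ => rfl) t
        ⟨hav, ⟨ht, fun C φ hC => hφt C φ (Set.subset_univ _) hC⟩, fun hX' => absurd hX' hX⟩)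
  · obtain ⟨b, hb⟩ := (Set.ne_univ_iff_exists_notMem D).1 hD
    obtain ⟨m, hm⟩ := (Set.finite_range fun a => (τ a).bid).bddAbove
    set τ' : Agent → CanAct Agent X := fun a =>
      if a ∈ D then τ a else ⟨none, if a = b then m + 1 else 0, t⟩ with hτ'
    have hagr : ∀ C φ, Agreed s τ' C φ → C ⊆ D ∧ Agreed s τ C φ := by
      intro C φ hC
      have hCD : C ⊆ D := by
        intro a ha
        by_contra haD
        have := hC.2.2 a ha
        simp [hτ', haD] at this
      refine ⟨hCD, hC.1, hC.2.1, fun a ha => ?_⟩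
      have := hC.2.2 a ha
      simpa [hτ', hCD ha] using this
    have hP : t ∈ Poss s τ' := ⟨ht, fun C φ hC => hφt C φ (hagr C φ hC).1 (hagr C φ hC).2⟩
    have hw : Wins τ' t := by
      refine ⟨b, by simp [hτ', hb], fun a hab => ?_⟩
      by_cases haD : a ∈ D
      · have : (τ a).bid ≤ m := hm ⟨a, rfl⟩
        simp [hτ', hb, haD]
        omega
      · simp [hτ', hb, haD, hab]
    exact hχt (h τ' (fun a ha => by simp [hτ', ha]) t
      ⟨hav.of_agree hagr, hP, fun _ => (result_eq hP hw).symm⟩)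

theorem truth_lemma [Finite Agent] (w : World Agent X) (φ : Formula Agent) :
    ∀ s : World Agent X, (canModel w).sat φ s ↔ φ ∈ s.carrier := by
  induction φ with
  | top => exact fun s => ⟨fun _ => s.isTheory.taut fun _ => rfl, fun _ => trivial⟩
  | atom n => exact fun s => Iff.rfl
  | neg φ ih => exact fun s => (not_congr (ih s)).trans (s.neg_mem φ).symm
  | and φ ψ ih₁ ih₂ => exact fun s => (and_congr (ih₁ s) (ih₂ s)).trans (s.and_mem φ ψ).symm
  | coal C φ ih =>
    intro s
    refine ((canModel w).sat_coal C φ s).trans ⟨?_, ?_⟩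
    · rintro ⟨τ, hne, h⟩
      exact forces_of_profile hne fun τ' hτ' t ht => (ih t).1 (h τ' hτ' t ht)
    · intro hs
      obtain ⟨τ, hne, h⟩ := exists_profile_of_forces hs
      exact ⟨τ, hne, fun τ' hτ' t ht => (ih t).2 (h τ' hτ' t ht)⟩

theorem completeness [Finite Agent] {φ : Formula Agent} (h : XValid X φ) : Deriv X φ := by
  by_contra hφ
  obtain ⟨w, -, hw⟩ := exists_world (X := X) (J := {ψ | Deriv X (ψ.imp φ)}) (isTheory_deriv X)
    (.taut (by intro v; simp [Formula.evalProp, Formula.imp, Formula.or, Formula.bot]))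
    (fun ψ₁ h₁ ψ₂ h₂ => .mp (.mp (.taut (by
      intro v; simp [Formula.evalProp, Formula.imp, Formula.or]; grind)) h₁) h₂)
    (fun ψ h₁ h₂ => hφ (.mp h₂ h₁))
  refine hw φ ((truth_lemma w φ w).1 (h (canModel w) (canModel_isX w) w)) (.taut ?_)
  intro v; simp [Formula.evalProp, Formula.imp, Formula.or]

end Canonical

/-- Soundness and completeness of XL: for every X ∈ ES and formula φ,
⊢_XL φ if and only if ⊨_XL φ. -/
theorem soundness_and_completeness {Agent : Type} [Fintype Agent] (X : Set P3)
    (φ : Formula Agent) : Deriv X φ ↔ XValid X φ := by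
  exact ⟨soundness, completeness⟩

end CL
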